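/- arXiv:2411.14689 — 8 statements merged into one kernel-verified Lean document; each statement's English description precedes it below -/
import Mathlib

section
/- There exists an ultrafilter p on ℝ that is both idempotent and in 0⁺, i.e., for every S ⊆ ℝ, S ∈ p iff {y : ℝ | {x : ℝ | x + y ∈ S} ∈ p} ∈ p, and for every real ε > 0 the open interval (0, ε) belongs to p. -/
/-!
The ultrafilters finer than `𝓝[>] 0` form a nonempty closed subset of the compact space of
ultrafilters. A sum of two positive elements close to `0` is again positive and close to `0`, so
this subset is closed under the addition of ultrafilters, and the Ellis–Numakura lemma gives an
idempotent in it.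
-/

open Filter Topology

attribute [local instance] Ultrafilter.mul Ultrafilter.add
  Ultrafilter.semigroup Ultrafilter.addSemigroup

theorem isClosed_setOf_ultrafilter_le {α : Type*} (F : Filter α) :
    IsClosed {p : Ultrafilter α | (p : Filter α) ≤ F} := by
  simp only [Filter.le_def, Set.ofPred_forall]
  exact isClosed_biInter fun s _ ↦ ultrafilter_isClosed_basic s

@[to_additive]
theorem ultrafilter_mul_le {M : Type*} [Mul M] {F G H : Filter M} {p q : Ultrafilter M}
    (hp : (p : Filter M) ≤ F) (hq : (q : Filter M) ≤ G)
    (hmul : Tendsto (fun x : M × M ↦ x.1 * x.2) (F.curry G) H) :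
    ((p * q : Ultrafilter M) : Filter M) ≤ H := by
  intro s hs
  have hs' : ∀ᶠ x in F, ∀ᶠ y in G, x * y ∈ s := eventually_curry_iff.mp (hmul hs)
  exact (Ultrafilter.eventually_mul p q (· ∈ s)).mpr
    ((hs'.filter_mono hp).mono fun _ hx ↦ hx.filter_mono hq)

@[to_additive]
theorem exists_ultrafilter_le_mul_self_eq {M : Type*} [Semigroup M] {F : Filter M} [F.NeBot]
    (hmul : Tendsto (fun x : M × M ↦ x.1 * x.2) (F.curry F) F) :
    ∃ p : Ultrafilter M, (p : Filter M) ≤ F ∧ p * p = p :=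
  exists_idempotent_in_compact_subsemigroup Ultrafilter.continuous_mul_left _
    (Ultrafilter.exists_le F) (isClosed_setOf_ultrafilter_le F).isCompact
    fun _ hp _ hq ↦ ultrafilter_mul_le hp hq hmul

@[to_additive]
theorem tendsto_mul_nhdsGT_one {M : Type*} [MulOneClass M] [Preorder M] [MulLeftMono M]
    [TopologicalSpace M] [ContinuousMul M] :
    Tendsto (fun x : M × M ↦ x.1 * x.2) (𝓝[>] 1 ×ˢ 𝓝[>] 1) (𝓝[>] 1) := by
  rw [← nhdsWithin_prod_eq]
  refine tendsto_nhdsWithin_iff.mpr ⟨?_, eventually_nhdsWithin_of_forall fun x hx ↦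
    Left.one_lt_mul' hx.1 hx.2⟩
  simpa using (continuous_mul.tendsto ((1, 1) : M × M)).mono_left nhdsWithin_le_nhds

theorem stmt_2_general {M : Type*} [AddMonoid M] [Preorder M] [AddLeftMono M]
    [TopologicalSpace M] [ContinuousAdd M] [(𝓝[>] (0 : M)).NeBot] :
    ∃ p : Ultrafilter M,
      (∀ S : Set M, S ∈ p ↔ {y : M | {x : M | y + x ∈ S} ∈ p} ∈ p) ∧
      (p : Filter M) ≤ 𝓝[>] 0 := by
  obtain ⟨p, hle, hadd⟩ := exists_ultrafilter_le_add_self_eq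
    (tendsto_add_nhdsGT_zero.mono_left (curry_le_prod (l := 𝓝[>] (0 : M))))
  refine ⟨p, fun S ↦ ?_, hle⟩
  have hS := Ultrafilter.eventually_add p p (· ∈ S)
  rwa [hadd] at hS

theorem stmt_2 :
    ∃ p : Ultrafilter ℝ,
      (∀ S : Set ℝ, S ∈ p ↔ {y : ℝ | {x : ℝ | x + y ∈ S} ∈ p} ∈ p) ∧
      (∀ ε : ℝ, 0 < ε → Set.Ioo (0 : ℝ) ε ∈ p) := by
  obtain ⟨p, hidem, hle⟩ := stmt_2_general (M := ℝ)
  exact ⟨p, by simpa only [add_comm] using hidem, fun ε hε ↦ hle (Ioo_mem_nhdsGT hε)⟩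
end

section
/- Let p be an idempotent ultrafilter on ℝ with p ∈ 0⁺. Let f, g : ℝ → ℝ satisfy {x : ℝ | f is differentiable at x} ∈ p and {x : ℝ | g is differentiable at x} ∈ p. If {x : ℝ | f x = g x} ∈ p, then {x : ℝ | deriv f x = deriv g x} ∈ p. -/
open Filter Topology

/-! By idempotence, for `p`-almost every `y` the equality `f (x + y) = g (x + y)` holds for
`p`-almost every `x`. Since `p` is concentrated on nonzero infinitesimals, `f` and `g` then agree
at points other than `y` arbitrarily close to `y`, so the derivative of `f - g` at `y` is zero. -/

section

variable {𝕜 F : Type*} [NontriviallyNormedField 𝕜] [NormedAddCommGroup F] [NormedSpace 𝕜 F]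
  {f g : 𝕜 → F} {y : 𝕜} {l : Filter 𝕜}

theorem deriv_eq_of_frequently_eq (hf : DifferentiableAt 𝕜 f y) (hg : DifferentiableAt 𝕜 g y)
    (hfg : ∃ᶠ x in 𝓝[≠] y, f x = g x) : deriv f y = deriv g y := by
  have hsub : ∃ᶠ x in 𝓝[≠] y, (f - g) x = 0 := hfg.mono fun _ ↦ sub_eq_zero_of_eq
  rw [← sub_eq_zero, ← deriv_sub hf hg]
  exact deriv_zero_of_frequently_const hsub

theorem deriv_eq_of_frequently_add_eq (hl : l ≤ 𝓝[≠] 0) (hf : DifferentiableAt 𝕜 f y)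
    (hg : DifferentiableAt 𝕜 g y) (hfg : ∃ᶠ x in l, f (x + y) = g (x + y)) :
    deriv f y = deriv g y := by
  have hshift : Tendsto (· + y) l (𝓝[≠] y) := by
    simpa only [Tendsto, zero_add] using (map_mono hl).trans_eq (map_add_right_nhdsNE (c := y))
  exact deriv_eq_of_frequently_eq hf hg (hshift.frequently hfg)

theorem stmt_4_general (hl : l ≤ 𝓝[≠] 0) (hadd : ∀ S ∈ l, ∀ᶠ y in l, ∃ᶠ x in l, x + y ∈ S)
    (hf : ∀ᶠ x in l, DifferentiableAt 𝕜 f x) (hg : ∀ᶠ x in l, DifferentiableAt 𝕜 g x)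
    (hfg : f =ᶠ[l] g) : deriv f =ᶠ[l] deriv g := by
  filter_upwards [hf, hg, hadd _ hfg] with y hfy hgy hfgy
  exact deriv_eq_of_frequently_add_eq hl hfy hgy hfgy

end

theorem stmt_4 (p : Ultrafilter ℝ)
    (hidem : ∀ S : Set ℝ, S ∈ p ↔ {y : ℝ | {x : ℝ | x + y ∈ S} ∈ p} ∈ p)
    (hpos : ∀ ε : ℝ, 0 < ε → Set.Ioo (0 : ℝ) ε ∈ p)
    (f g : ℝ → ℝ)
    (hf : {x : ℝ | DifferentiableAt ℝ f x} ∈ p)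
    (hg : {x : ℝ | DifferentiableAt ℝ g x} ∈ p)
    (hfg : {x : ℝ | f x = g x} ∈ p) :
    {x : ℝ | deriv f x = deriv g x} ∈ p := by
  have hp : (p : Filter ℝ) ≤ 𝓝[>] 0 := (nhdsGT_basis 0).ge_iff.2 hpos
  have hadd : ∀ S ∈ (p : Filter ℝ), ∀ᶠ y in p, ∃ᶠ x in p, x + y ∈ S := fun S hS ↦
    Eventually.mono ((hidem S).1 hS) fun _ ↦ Eventually.frequently
  exact stmt_4_general (hp.trans (nhdsGT_le_nhdsNE 0)) hadd hf hg hfg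
end

section
/- Let p be an idempotent ultrafilter on ℝ with p ∈ 0⁺. There exists f : ℝ → ℝ such that {x : ℝ | f has derivative 0 at x} ∈ p, yet for every r ∈ ℝ, {x : ℝ | f x = r} ∉ p. (So [f]′ = 0 does not imply f is constant ultrafilter often.) -/
/-!
A nonprincipal ultrafilter `p` on `ℝ` either converges to some `a` or tends to infinity, so
`g x = (x - a)⁻¹` or `g x = x` is continuous `p`-often and tends to infinity along `p`. The function
`⌊g + c⌋` then has fibres outside `p`, and it is locally constant wherever `g` is continuous and
`g + c` is not an integer. Since `g` and `g + 1 / 2` are never integers simultaneously, the latter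
holds `p`-often for `c = 0` or for `c = 1 / 2`.
-/

open Filter Topology
open Bornology (cobounded)

theorem intCast_add_half_notMem_range_intCast {K : Type*} [DivisionRing K] [CharZero K] (n : ℤ) :
    (n : K) + 1 / 2 ∉ Set.range ((↑) : ℤ → K) := by
  rintro ⟨m, hm⟩
  have two_mul_eq : (2 * m : K) = 2 * n + 1 := by rw [hm, mul_add, mul_one_div_cancel two_ne_zero]
  have : 2 * m = 2 * n + 1 := mod_cast two_mul_eq
  omega

theorem exists_eventually_add_notMem_range_intCast {K : Type*} [DivisionRing K] [CharZero K]
    (p : Ultrafilter K) : ∃ c : K, ∀ᶠ t in p, t + c ∉ Set.range ((↑) : ℤ → K) := by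
  rcases p.em (· ∈ Set.range ((↑) : ℤ → K)) with integral | nonintegral
  · refine ⟨1 / 2, integral.mono ?_⟩
    rintro _ ⟨n, rfl⟩
    exact intCast_add_half_notMem_range_intCast n
  · exact ⟨0, by simpa only [add_zero] using nonintegral⟩

section Floor

variable {R : Type*} [Ring R] [LinearOrder R] [FloorRing R]

theorem tendsto_floor_add_const_cofinite [IsStrictOrderedRing R] (c : R) :
    Tendsto (fun t : R ↦ ⌊t + c⌋) (atBot ⊔ atTop) cofinite := by
  rw [Int.cofinite_eq]
  exact (tendsto_floor_atBot.comp (tendsto_atBot_add_const_right _ c tendsto_id)).sup_sup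
    (tendsto_floor_atTop.comp (tendsto_atTop_add_const_right _ c tendsto_id))

theorem eventually_floor_eq_of_notMem_range_intCast [TopologicalSpace R] [OrderClosedTopology R]
    {t : R} (ht : t ∉ Set.range ((↑) : ℤ → R)) : ∀ᶠ s in 𝓝 t, ⌊s⌋ = ⌊t⌋ := by
  have floor_lt : (⌊t⌋ : R) < t := (Int.floor_le t).lt_of_ne fun h ↦ ht ⟨⌊t⌋, h⟩
  filter_upwards [Ioo_mem_nhds floor_lt (Int.lt_floor_add_one t)] with s hs
  exact Int.floor_eq_iff.2 ⟨hs.1.le, hs.2⟩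

end Floor

theorem exists_locally_const_tendsto_cofinite {K X : Type*} [Field K] [LinearOrder K]
    [IsStrictOrderedRing K] [FloorRing K] [TopologicalSpace K] [OrderTopology K]
    [TopologicalSpace X] {p : Ultrafilter X} {g : X → K}
    (hcont : ∀ᶠ x in p, ContinuousAt g x) (hg : Tendsto g p (atBot ⊔ atTop)) :
    ∃ f : X → ℤ, (∀ᶠ x in p, ∀ᶠ y in 𝓝 x, f y = f x) ∧ Tendsto f p cofinite := by
  obtain ⟨c, hc⟩ := exists_eventually_add_notMem_range_intCast (p.map g)
  refine ⟨fun x ↦ ⌊g x + c⌋, ?_, (tendsto_floor_add_const_cofinite c).comp hg⟩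
  filter_upwards [hcont, hc] with x hx hxc
  exact (hx.add_const c).eventually (eventually_floor_eq_of_notMem_range_intCast hxc)

theorem ultrafilter_le_cocompact_or_exists_le_nhds {X : Type*} [TopologicalSpace X]
    (p : Ultrafilter X) : (p : Filter X) ≤ cocompact X ∨ ∃ a, (p : Filter X) ≤ 𝓝 a := by
  refine or_iff_not_imp_left.2 fun h ↦ ?_
  obtain ⟨s, hsp, hs⟩ := (disjoint_cocompact_right _).1 (Ultrafilter.disjoint_iff_not_le.2 h)
  obtain ⟨a, -, ha⟩ := hs.ultrafilter_le_nhds' p hsp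
  exact ⟨a, ha⟩

theorem exists_continuousAt_tendsto_cobounded {𝕜 : Type*} [NormedField 𝕜] [ProperSpace 𝕜]
    {p : Ultrafilter 𝕜} (hp : (p : Filter 𝕜) ≤ cofinite) :
    ∃ g : 𝕜 → 𝕜, (∀ᶠ x in p, ContinuousAt g x) ∧ Tendsto g p (cobounded 𝕜) := by
  rcases ultrafilter_le_cocompact_or_exists_le_nhds p with h | ⟨a, ha⟩
  · rw [← Metric.cobounded_eq_cocompact] at h
    exact ⟨id, .of_forall fun _ ↦ continuousAt_id, h⟩
  · have ne : ∀ᶠ x in p, x ≠ a := le_cofinite_iff_eventually_ne.1 hp a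
    have sub_tendsto : Tendsto (· - a) p (𝓝[≠] 0) :=
      tendsto_nhdsWithin_iff.2
        ⟨tendsto_sub_nhds_zero_iff.2 ha, ne.mono fun _ ↦ sub_ne_zero_of_ne⟩
    refine ⟨fun x ↦ (x - a)⁻¹, ?_, tendsto_inv₀_nhdsNE_zero.comp sub_tendsto⟩
    filter_upwards [ne] with x hx
    exact (continuousAt_id.sub continuousAt_const).inv₀ (sub_ne_zero_of_ne hx)

theorem stmt_5_general (p : Ultrafilter ℝ) (hp : (p : Filter ℝ) ≤ cofinite) :
    ∃ f : ℝ → ℝ, {x : ℝ | HasDerivAt f 0 x} ∈ p ∧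
      ∀ r : ℝ, {x : ℝ | f x = r} ∉ p := by
  obtain ⟨g, hcont, hg⟩ := exists_continuousAt_tendsto_cobounded hp
  rw [IsOrderBornology.cobounded_eq] at hg
  obtain ⟨f, hconst, hf⟩ := exists_locally_const_tendsto_cofinite hcont hg
  refine ⟨fun x ↦ f x, hconst.mono fun x hx ↦ ?_, fun r ↦ ?_⟩
  · exact (hasDerivAt_const x (f x : ℝ)).congr_of_eventuallyEq
      (hx.mono fun _ ↦ congrArg Int.cast)
  · have cast_tendsto : Tendsto (fun x ↦ (f x : ℝ)) p cofinite :=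
      Int.cast_injective.tendsto_cofinite.comp hf
    exact Ultrafilter.compl_mem_iff_notMem.1
      (cast_tendsto (Set.finite_singleton r).compl_mem_cofinite)

theorem stmt_5 (p : Ultrafilter ℝ)
    (hidem : ∀ S : Set ℝ, S ∈ p ↔ {y : ℝ | {x : ℝ | x + y ∈ S} ∈ p} ∈ p)
    (hpos : ∀ ε : ℝ, 0 < ε → Set.Ioo (0 : ℝ) ε ∈ p) :
    ∃ f : ℝ → ℝ, {x : ℝ | HasDerivAt f 0 x} ∈ p ∧
      ∀ r : ℝ, {x : ℝ | f x = r} ∉ p := by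
  have le_nhdsGT : (p : Filter ℝ) ≤ 𝓝[>] 0 := (nhdsGT_basis 0).ge_iff.2 hpos
  exact stmt_5_general p (le_nhdsGT.trans ((nhdsGT_le_nhdsNE 0).trans (nhdsNE_le_cofinite 0)))
end

section
/- Let p be an idempotent ultrafilter on ℝ with p ∈ 0⁺. Let f, g, F, G : ℝ → ℝ be entire. If {x : ℝ | f x = F x} ∈ p and {x : ℝ | g x = G x} ∈ p, then {x : ℝ | f (g x) = F (G x)} ∈ p. (Hence composition of entire hyperreal numbers, [f] ∘ [g] = [f ∘ g], is well-defined.) -/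
def IsEntire (f : ℝ → ℝ) : Prop :=
  ∃ a : ℕ → ℝ, ∀ x : ℝ, HasSum (fun k : ℕ => a k * x ^ k) (f x)

/-!
Entire functions are analytic on the connected line, and a filter below `𝓝[≠] 0` contains only sets
that accumulate at `0`. By the identity theorem such a filter cannot identify two distinct entire
functions: equality of germs is equality of functions, so composition respects it.
-/

open Filter Set Topology

section EverywhereConvergentSeries

variable {𝕜 E : Type*} [NontriviallyNormedField 𝕜] [NormedAddCommGroup E] [NormedSpace 𝕜 E]
  {q : FormalMultilinearSeries 𝕜 𝕜 E} {f : 𝕜 → E}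

theorem radius_eq_top_of_forall_summable_pow_smul_coeff
    (h : ∀ z : 𝕜, Summable fun n => z ^ n • q.coeff n) : q.radius = ⊤ := by
  refine ENNReal.eq_top_of_forall_nnreal_le fun r => ?_
  obtain ⟨z, hz⟩ := NormedField.exists_lt_norm 𝕜 (r : ℝ)
  have terms_tendsto_zero : Tendsto (fun n => ‖q n‖ * (‖z‖₊ : ℝ) ^ n) atTop (𝓝 0) := by
    simpa [norm_smul, mul_comm] using (h z).tendsto_atTop_zero.norm
  calc (r : ENNReal) ≤ ‖z‖₊ := by exact_mod_cast hz.le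
    _ ≤ q.radius := q.le_radius_of_tendsto terms_tendsto_zero

theorem hasFPowerSeriesOnBall_top_of_forall_hasSum
    (h : ∀ z : 𝕜, HasSum (fun n => z ^ n • q.coeff n) (f z)) :
    HasFPowerSeriesOnBall f q 0 ⊤ where
  r_le := (radius_eq_top_of_forall_summable_pow_smul_coeff fun z => (h z).summable).ge
  r_pos := ENNReal.zero_lt_top
  hasSum {z} _ := by simpa using h z

end EverywhereConvergentSeries

theorem IsEntire.analyticOnNhd {f : ℝ → ℝ} (hf : IsEntire f) : AnalyticOnNhd ℝ f univ := by
  obtain ⟨a, ha⟩ := hf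
  have hasFPowerSeries :
      HasFPowerSeriesOnBall f (FormalMultilinearSeries.ofScalars ℝ a) 0 ⊤ :=
    hasFPowerSeriesOnBall_top_of_forall_hasSum fun x => by simpa [mul_comm] using ha x
  simpa only [Metric.eball_top] using hasFPowerSeries.analyticOnNhd

section IdentityTheorem

variable {𝕜 E : Type*} [NontriviallyNormedField 𝕜] [ConnectedSpace 𝕜]
  [NormedAddCommGroup E] [NormedSpace 𝕜 E] {l : Filter 𝕜} [l.NeBot] {z : 𝕜}

theorem eq_of_analyticOnNhd_of_eventuallyEq (hl : l ≤ 𝓝[≠] z) {f F : 𝕜 → E}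
    (hf : AnalyticOnNhd 𝕜 f univ) (hF : AnalyticOnNhd 𝕜 F univ) (h : f =ᶠ[l] F) : f = F :=
  hf.eq_of_frequently_eq hF (h.frequently.filter_mono hl)

theorem stmt_7_general (hl : l ≤ 𝓝[≠] z) {f F : 𝕜 → E} {g G : 𝕜 → 𝕜}
    (hf : AnalyticOnNhd 𝕜 f univ) (hg : AnalyticOnNhd 𝕜 g univ)
    (hF : AnalyticOnNhd 𝕜 F univ) (hG : AnalyticOnNhd 𝕜 G univ)
    (hfF : f =ᶠ[l] F) (hgG : g =ᶠ[l] G) : f ∘ g = F ∘ G := by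
  rw [eq_of_analyticOnNhd_of_eventuallyEq hl hf hF hfF,
    eq_of_analyticOnNhd_of_eventuallyEq hl hg hG hgG]

end IdentityTheorem

theorem le_nhdsNE_of_forall_Ioo_mem {α : Type*} [LinearOrder α] [NoMaxOrder α]
    [TopologicalSpace α] [OrderTopology α] {l : Filter α} {a : α}
    (h : ∀ b, a < b → Ioo a b ∈ l) : l ≤ 𝓝[≠] a :=
  ((nhdsGT_basis a).ge_iff.2 h).trans (nhdsGT_le_nhdsNE a)

theorem stmt_7 (p : Ultrafilter ℝ)
    (hidem : ∀ S : Set ℝ, S ∈ p ↔ {y : ℝ | {x : ℝ | x + y ∈ S} ∈ p} ∈ p)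
    (hpos : ∀ ε : ℝ, 0 < ε → Set.Ioo (0 : ℝ) ε ∈ p)
    (f g F G : ℝ → ℝ)
    (hf : IsEntire f) (hg : IsEntire g) (hF : IsEntire F) (hG : IsEntire G)
    (hfF : {x : ℝ | f x = F x} ∈ p) (hgG : {x : ℝ | g x = G x} ∈ p) :
    {x : ℝ | f (g x) = F (G x)} ∈ p :=
  Eventually.of_forall (f := (p : Filter ℝ)) <| congrFun <|
    stmt_7_general (le_nhdsNE_of_forall_Ioo_mem hpos) hf.analyticOnNhd hg.analyticOnNhd
      hF.analyticOnNhd hG.analyticOnNhd hfF hgG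
end

section
/- Let q be a free idempotent ultrafilter on ℕ and let γ > 0 be an irrational real number. Then for every real ε > 0, the set {n : ℕ | |rm_γ(n)| < ε} belongs to q. -/
noncomputable def rm (γ : ℝ) (n : ℕ) : ℝ := (n : ℝ) - γ * (round ((n : ℝ) / γ) : ℝ)

/-!
The absolute value of `rm γ n` is the norm of the class of `n` in the circle `ℝ / γℤ`. By
compactness, this class converges along `q` to some `a`. Limits along ultrafilters turn addition of
ultrafilters into addition of points, so `q + q = q` forces `a + a = a`, that is, `a = 0`.
-/

open Filter Topology

section UltrafilterAdd

attribute [local instance] Ultrafilter.add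

theorem ultrafilter_add_self_eq_iff {M : Type*} [AddCommMagma M] {q : Ultrafilter M} :
    q + q = q ↔ ∀ S : Set M, S ∈ q ↔ {n : M | {m : M | m + n ∈ S} ∈ q} ∈ q := by
  have mem_add_self (S : Set M) : S ∈ q + q ↔ {n : M | {m : M | m + n ∈ S} ∈ q} ∈ q :=
    calc
      S ∈ q + q ↔ {n : M | {m : M | n + m ∈ S} ∈ q} ∈ q :=
        Ultrafilter.eventually_add q q (· ∈ S)
      _ ↔ {n : M | {m : M | m + n ∈ S} ∈ q} ∈ q := by simp only [add_comm]
  simp only [Ultrafilter.ext_iff, mem_add_self, iff_comm]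

variable {M G : Type*} [Add M] [TopologicalSpace G]

theorem tendsto_ultrafilter_add [Add G] [ContinuousAdd G] {p q : Ultrafilter M} {f : M →ₙ+ G}
    {a b : G} (hp : Tendsto f p (𝓝 a)) (hq : Tendsto f q (𝓝 b)) :
    Tendsto f ↑(p + q) (𝓝 (a + b)) := by
  refine tendsto_def.mpr fun U hU => (Ultrafilter.eventually_add p q (f · ∈ U)).mpr ?_
  have eventually_add_mem : ∀ᶠ x : M × M in (p : Filter M) ×ˢ (q : Filter M), f x.1 + f x.2 ∈ U :=
    ((hp.comp tendsto_fst).add (hq.comp tendsto_snd)).eventually_mem hU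
  simpa only [map_add] using eventually_add_mem.curry

theorem tendsto_zero_of_ultrafilter_add_self_eq [AddLeftCancelMonoid G] [ContinuousAdd G]
    [CompactSpace G] [T2Space G] {q : Ultrafilter M} (hq : q + q = q) (f : M →ₙ+ G) :
    Tendsto f q (𝓝 0) := by
  have tendsto_lim : Tendsto f q (𝓝 (q.map f).lim) := (q.map f).le_nhds_lim
  have tendsto_lim_add_lim : Tendsto f q (𝓝 ((q.map f).lim + (q.map f).lim)) := by
    simpa only [hq] using tendsto_ultrafilter_add tendsto_lim tendsto_lim
  have lim_eq_zero : (q.map f).lim = 0 :=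
    add_eq_left.mp (tendsto_nhds_unique tendsto_lim_add_lim tendsto_lim)
  rwa [lim_eq_zero] at tendsto_lim

end UltrafilterAdd

theorem norm_coe_addCircle_abs (p x : ℝ) : ‖(x : AddCircle |p|)‖ = ‖(x : AddCircle p)‖ := by
  rcases abs_choice p with hp | hp
  · rw [hp]
  · rw [hp, AddCircle.norm_neg_period]

theorem abs_rm_eq_norm_coe_addCircle (γ : ℝ) (n : ℕ) : |rm γ n| = ‖((n : ℝ) : AddCircle γ)‖ := by
  rw [AddCircle.norm_eq, rm, div_eq_inv_mul, mul_comm γ]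

theorem stmt_9_general (q : Ultrafilter ℕ)
    (hidem : ∀ S : Set ℕ, S ∈ q ↔ {n : ℕ | {m : ℕ | m + n ∈ S} ∈ q} ∈ q)
    (γ : ℝ) (hγ : γ ≠ 0) :
    ∀ ε : ℝ, 0 < ε → {n : ℕ | |rm γ n| < ε} ∈ q := by
  intro ε hε
  -- Mathlib has compactness of `AddCircle p` only for `0 < p`.
  have : Fact (0 < |γ|) := ⟨abs_pos.mpr hγ⟩
  let toCircle : ℕ →+ AddCircle |γ| :=
    (QuotientAddGroup.mk' (AddSubgroup.zmultiples |γ|)).comp (Nat.castAddMonoidHom ℝ)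
  have norm_toCircle (n : ℕ) : ‖toCircle n‖ = |rm γ n| :=
    (norm_coe_addCircle_abs γ n).trans (abs_rm_eq_norm_coe_addCircle γ n).symm
  have tendsto_toCircle : Tendsto toCircle q (𝓝 0) :=
    tendsto_zero_of_ultrafilter_add_self_eq (ultrafilter_add_self_eq_iff.mpr hidem)
      toCircle.toAddHom
  have tendsto_abs_rm : Tendsto (fun n => |rm γ n|) q (𝓝 0) := by
    simpa only [norm_toCircle] using tendsto_zero_iff_norm_tendsto_zero.mp tendsto_toCircle
  exact tendsto_abs_rm.eventually_lt_const hε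

theorem stmt_9 (q : Ultrafilter ℕ)
    (hfree : ∀ S : Set ℕ, S.Finite → S ∉ q)
    (hidem : ∀ S : Set ℕ, S ∈ q ↔ {n : ℕ | {m : ℕ | m + n ∈ S} ∈ q} ∈ q)
    (γ : ℝ) (hγpos : 0 < γ) (hγirr : Irrational γ) :
    ∀ ε : ℝ, 0 < ε → {n : ℕ | |rm γ n| < ε} ∈ q :=
  stmt_9_general q hidem γ hγpos.ne'
end

section
/- Let q be a free idempotent ultrafilter on ℕ and let f, g : ℕ → ℝ. If {n : ℕ | f n = g n} ∈ q, then {n : ℕ | {m : ℕ | f(n + m) − f(n) = g(n + m) − g(n)} ∈ q} ∈ q. (I.e., if [f]_q = [g]_q then the finite derivatives Δf and Δg, where Δf(n) is the germ m ↦ f(n + m) − f(n) over q, agree q-almost everywhere; hence Δ[f] = ⟦Δf⟧ is well-defined on the hyperreals built from q.) -/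
/-!
Idempotency turns a property holding at `q`-almost every point into one holding, for `q`-almost
every `n`, at `n + m` for `q`-almost every `m`. Hence if `f` and `g` agree `q`-almost everywhere,
then for `q`-almost every `n` they agree both at `n` and at almost all translates `n + m`, and the
differences agree.
-/

open Filter

section FiniteDerivative

variable {M G : Type*} [Add M] [Sub G]

/-- The finite derivative `Δf` of `f` along a filter `l`, with values in the reduced power
`l.Germ G`; for an ultrafilter `l` on `ℕ` and `G = ℝ`, these are the hyperreals built from `l`. -/
def finiteDerivative (l : Filter M) (f : M → G) (n : M) : l.Germ G :=
  ((fun m ↦ f (n + m) - f n : M → G) : l.Germ G)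

theorem finiteDerivative_eq_of_eq {l : Filter M} {f g : M → G} {n : M} (hn : f n = g n)
    (htranslate : ∀ᶠ m in l, f (n + m) = g (n + m)) :
    finiteDerivative l f n = finiteDerivative l g n :=
  Germ.coe_eq.2 <| htranslate.mono fun _ hm ↦ congrArg₂ (· - ·) hm hn

theorem stmt_13_general {l : Filter M}
    (hl : ∀ p : M → Prop, (∀ᶠ n in l, p n) → ∀ᶠ n in l, ∀ᶠ m in l, p (n + m))
    {f g : M → G} (hfg : f =ᶠ[l] g) :
    finiteDerivative l f =ᶠ[l] finiteDerivative l g := by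
  have htranslate : ∀ᶠ n in l, ∀ᶠ m in l, f (n + m) = g (n + m) := hl _ hfg
  filter_upwards [hfg, htranslate] with n hn hnm
  exact finiteDerivative_eq_of_eq hn hnm

end FiniteDerivative

theorem stmt_13 (q : Ultrafilter ℕ)
    (hfree : ∀ S : Set ℕ, S.Finite → S ∉ q)
    (hidem : ∀ S : Set ℕ, S ∈ q ↔ {n : ℕ | {m : ℕ | m + n ∈ S} ∈ q} ∈ q)
    (f g : ℕ → ℝ) (hfg : {n : ℕ | f n = g n} ∈ q) :
    {n : ℕ | {m : ℕ | f (n + m) - f n = g (n + m) - g n} ∈ q} ∈ q := by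
  have hl (p : ℕ → Prop) (hp : ∀ᶠ n in q, p n) : ∀ᶠ n in q, ∀ᶠ m in q, p (n + m) := by
    have hswap : ∀ᶠ n in q, ∀ᶠ m in q, p (m + n) := (hidem {n | p n}).1 hp
    simpa only [add_comm] using hswap
  exact (stmt_13_general hl hfg).mono fun _ ↦ Germ.coe_eq.1
end

section
/- (Hindman's Theorem) If f : ℕ → ℝ has finite range, then there exist c ∈ ℝ and an infinite set S ⊆ ℕ such that for every finite nonempty X ⊆ S, f(∑_{x ∈ X} x) = c. -/
/-!
Hindman's theorem for semigroups yields a *sequence* `b` all of whose finite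
sums over distinct indices have the same color. Its terms may repeat, so its range need not be an
infinite set. If the range is infinite, it is the required set. If it is finite, some value `v`
occurs infinitely often, so every `n • v` with `n ≠ 0` is a sum of terms of `b`, and the nonzero
multiples of `v` form the required set. For the latter to be infinite `v` must have infinite order,
which is why `b` is sought among the positive multiples of one fixed element of infinite order.
-/

open AddSubmonoid Hindman

/-- The set of sums of nonempty finite subsets of `S`. In contrast to `Hindman.FS`, which takes a
sequence and allows equal terms at different indices, the summands are distinct elements. -/
def finiteSums {M : Type*} [AddCommMonoid M] (S : Set M) : Set M :=
  {m | ∃ X : Finset M, X.Nonempty ∧ ↑X ⊆ S ∧ ∑ x ∈ X, x = m}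

theorem exists_FS_subset_FS_inter_preimage_singleton {M α : Type*} [AddSemigroup M]
    (a : Stream' M) (f : M → α) (hf : (f '' FS a).Finite) :
    ∃ (c : α) (b : Stream' M), FS b ⊆ FS a ∩ f ⁻¹' {c} := by
  have hcover : FS a ⊆ ⋃₀ ((fun c => FS a ∩ f ⁻¹' {c}) '' (f '' FS a)) := fun m hm =>
    ⟨_, Set.mem_image_of_mem _ (Set.mem_image_of_mem f hm), hm, rfl⟩
  obtain ⟨_, ⟨c, -, rfl⟩, b, hb⟩ := FS_partition_regular a _ (hf.image _) hcover
  exact ⟨c, b, hb⟩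

theorem exists_nsmul_eq_of_mem_FS_const {M : Type*} [AddMonoid M] {x m : M}
    (hm : m ∈ FS (Stream'.const x)) : ∃ n : ℕ, n ≠ 0 ∧ n • x = m := by
  generalize ha : Stream'.const x = a at hm
  induction hm with
  | head' => exact ⟨1, one_ne_zero, by rw [one_nsmul, ← ha]; rfl⟩
  | tail' a _ _ ih => exact ih (by rw [← ha, Stream'.tail_const])
  | cons' a _ _ ih =>
    obtain ⟨n, -, rfl⟩ := ih (by rw [← ha, Stream'.tail_const])
    exact ⟨n + 1, n.succ_ne_zero, by rw [succ_nsmul', ← ha]; rfl⟩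

section AddCommMonoid

variable {M : Type*} [AddCommMonoid M]

theorem exists_nsmul_eq_of_mem_finiteSums_multiples {v m : M}
    (hm : m ∈ finiteSums ((multiples v : Set M) \ {0})) : ∃ n : ℕ, n ≠ 0 ∧ n • v = m := by
  obtain ⟨X, hX, hXv, rfl⟩ := hm
  refine Finset.sum_induction_nonempty _ (fun m => ∃ n : ℕ, n ≠ 0 ∧ n • v = m) ?_ hX ?_
  · rintro _ _ ⟨k, hk, rfl⟩ ⟨l, -, rfl⟩
    exact ⟨k + l, by lia, add_nsmul v k l⟩
  · intro x hx
    obtain ⟨⟨n, rfl⟩, hne⟩ := hXv hx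
    exact ⟨n, fun hn => hne (by simp [hn]), rfl⟩

theorem nsmul_mem_FS_of_infinite_fiber {a : Stream' M} {v : M} (hv : (a.get ⁻¹' {v}).Infinite)
    {n : ℕ} (hn : n ≠ 0) : n • v ∈ FS a := by
  obtain ⟨s, hs, hcard⟩ := hv.exists_subset_card_eq n
  have hsum : ∑ i ∈ s, a.get i = n • v := by
    rw [Finset.sum_congr rfl hs, Finset.sum_const, hcard]
  exact hsum ▸ FS.finsetSum a s (Finset.card_ne_zero.mp (hcard ▸ hn))

theorem finiteSums_range_subset_FS (a : Stream' M) : finiteSums (Set.range a.get) ⊆ FS a := by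
  classical
  rintro _ ⟨X, hX, hXa, rfl⟩
  obtain ⟨s, -, hinj, rfl⟩ :=
    Finset.exists_subset_injOn_image_eq_of_surjOn Set.univ X (by simpa [Set.SurjOn] using hXa)
  rw [Finset.sum_image hinj]
  exact FS.finsetSum a s (Finset.image_nonempty.mp hX)

theorem exists_infinite_finiteSums_subset_FS (a : Stream' M)
    (ha : ∀ i, (multiples (a.get i) : Set M).Infinite) :
    ∃ S : Set M, S.Infinite ∧ finiteSums S ⊆ FS a := by
  by_cases hrange : (Set.range a.get).Infinite
  · exact ⟨_, hrange, finiteSums_range_subset_FS a⟩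
  obtain ⟨i, hi⟩ : ∃ i, (a.get ⁻¹' {a.get i}).Infinite := by
    by_contra! hfin
    have hpre := (Set.not_infinite.mp hrange).preimage' (Set.forall_mem_range.mpr hfin)
    exact Set.infinite_univ (Set.preimage_range a.get ▸ hpre)
  refine ⟨_, (ha i).sdiff (Set.finite_singleton 0), fun m hm => ?_⟩
  obtain ⟨n, hn, rfl⟩ := exists_nsmul_eq_of_mem_finiteSums_multiples hm
  exact nsmul_mem_FS_of_infinite_fiber hi hn

end AddCommMonoid

theorem stmt_16_general {M α : Type*} [AddCancelCommMonoid M] {x : M} (hx : ¬IsOfFinAddOrder x)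
    (f : M → α) (hf : (Set.range f).Finite) :
    ∃ (c : α) (S : Set M), S.Infinite ∧
      ∀ X : Finset M, X.Nonempty → ↑X ⊆ S → f (∑ x ∈ X, x) = c := by
  obtain ⟨c, b, hb⟩ := exists_FS_subset_FS_inter_preimage_singleton (Stream'.const x) f
    (hf.subset (Set.image_subset_range _ _))
  have hmultiples (i : ℕ) : (multiples (b.get i) : Set M).Infinite := by
    obtain ⟨n, hn, hni⟩ := exists_nsmul_eq_of_mem_FS_const (hb (FS.singleton b i)).1
    rw [infinite_multiples, ← hni]
    exact fun h => hx (h.of_nsmul hn)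
  obtain ⟨S, hS, hSb⟩ := exists_infinite_finiteSums_subset_FS b hmultiples
  exact ⟨c, S, hS, fun X hX hXS => (hb (hSb ⟨X, hX, hXS, rfl⟩)).2⟩

theorem stmt_16 (f : ℕ → ℝ) (hf : (Set.range f).Finite) :
    ∃ (c : ℝ) (S : Set ℕ), S.Infinite ∧
      ∀ X : Finset ℕ, X.Nonempty → ↑X ⊆ S → f (∑ x ∈ X, x) = c :=
  stmt_16_general (not_isOfFinAddOrder_of_isAddTorsionFree one_ne_zero) f hf
end

section
/- Let γ > 0 be an irrational real number. For every f : ℝ → ℝ there exists a γ-periodic function f̂ : ℝ → ℝ (i.e., f̂(x + γ) = f̂(x) for all x ∈ ℝ) such that f̂(n) = f(n) for every n ∈ ℕ. -/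
/-!
A `γ`-periodic function on `ℝ` is a function on the circle `ℝ ⧸ ℤγ`. When `γ` is irrational,
distinct rationals have distinct classes there, so values at these classes can be prescribed freely.
-/

open Function

theorem exists_periodic_eq_of_factorsThrough_mk {G ι α : Type*} [AddGroup G] [Nonempty α] {c : G}
    {u : ι → G} {v : ι → α}
    (hv : v.FactorsThrough fun i ↦ (u i : G ⧸ AddSubgroup.zmultiples c)) :
    ∃ g : G → α, Periodic g c ∧ ∀ i, g (u i) = v i := by
  let g : G ⧸ AddSubgroup.zmultiples c → α := extend (fun i ↦ ↑(u i)) v (Classical.arbitrary _)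
  have hmk (x : G) : ((x + c : G) : G ⧸ AddSubgroup.zmultiples c) = x :=
    QuotientAddGroup.mk_add_of_mem x (AddSubgroup.mem_zmultiples c)
  exact ⟨fun x ↦ g x, fun x ↦ congrArg g (hmk x), hv.extend_apply _⟩

theorem injective_ratCast_addCircle_of_irrational {γ : ℝ} (hγ : Irrational γ) :
    Injective fun q : ℚ ↦ ((q : ℝ) : AddCircle γ) := by
  intro q r hqr
  have hsub : ((q - r : ℝ) : AddCircle γ) = 0 := sub_eq_zero.mpr hqr
  obtain ⟨k, hk⟩ : ∃ k : ℤ, k • γ = q - r := (AddCircle.coe_eq_zero_iff γ).mp hsub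
  rw [zsmul_eq_mul] at hk
  have hk_zero : k = 0 := by
    by_contra hk_ne
    exact (hγ.intCast_mul hk_ne).ne_rat (q - r) (by rw [hk, Rat.cast_sub])
  rw [hk_zero, Int.cast_zero, zero_mul] at hk
  exact_mod_cast sub_eq_zero.mp hk.symm

theorem stmt_18_general {α : Type*} {γ : ℝ} (hγ : Irrational γ) (f : ℝ → α) :
    ∃ fhat : ℝ → α, Periodic fhat γ ∧ ∀ q : ℚ, fhat q = f q :=
  have : Nonempty α := ⟨f 0⟩
  exists_periodic_eq_of_factorsThrough_mk
    ((injective_ratCast_addCircle_of_irrational hγ).factorsThrough fun q ↦ f q)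

theorem stmt_18 (γ : ℝ) (hγpos : 0 < γ) (hγirr : Irrational γ) (f : ℝ → ℝ) :
    ∃ fhat : ℝ → ℝ, (∀ x : ℝ, fhat (x + γ) = fhat x) ∧
      ∀ n : ℕ, fhat n = f n := by
  obtain ⟨fhat, hperiodic, heq⟩ := stmt_18_general hγirr f
  exact ⟨fhat, hperiodic, fun n ↦ by exact_mod_cast heq n⟩
end
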